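/- arXiv:math/0406317 — 3 statements merged into one kernel-verified Lean document; each statement's English description precedes it below -/
import Mathlib

section
/- Assume q is not a root of unity (t½ arbitrary nonzero). A nonzero eigenvector E ∈ V of the operator Y belongs to Rad if and only if ev(E) = 0, i.e., if and only if E(t⁻½) = 0. -/
noncomputable section

/-- `V = ℂ[X, X⁻¹]`, the space of complex Laurent polynomials. -/
abbrev V : Type := LaurentPolynomial ℂ

/-- The monomial `X ^ m`. -/
def Xm (m : ℤ) : V := LaurentPolynomial.T m

/-- The radical of the duality pairing. -/
def Rad (pair : V →ₗ[ℂ] V →ₗ[ℂ] ℂ) : Submodule ℂ V := LinearMap.ker pair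

/-
The pairing is symmetric, because the anti-involution of the double affine Hecke algebra which
exchanges `X` with `Y⁻¹` and fixes `T` is realised by taking adjoints; it sends `π = Y T⁻¹` to
`T⁻¹ X⁻¹ = X T`. Hence for `Y E = c E` one has `{E, g} = {g, E} = ev (L_g E) = g(c⁻¹) ev E`, which
vanishes for all `g` exactly when `ev E = 0`.

Each of these adjunctions is an identity between linear maps out of `K[X, X⁻¹]`: both sides agree at
`1`, and multiplying the argument by `X` transforms their difference by an injective linear map.
-/

section

open LaurentPolynomial Function

section LinearMaps

variable {R M : Type*}

theorem laurent_linearMap_ext_T [Semiring R] [AddCommMonoid M] [Module R M]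
    {φ ψ : R[T;T⁻¹] →ₗ[R] M} (h : ∀ m, φ (T m) = ψ (T m)) : φ = ψ :=
  AddMonoidAlgebra.lhom_ext' fun m => LinearMap.ext_ring (h m)

theorem laurent_map_mul_of_map_T_mul_T {A : Type*} [CommSemiring R] [Semiring A] [Algebra R A]
    {φ : R[T;T⁻¹] →ₗ[R] A} (h : ∀ m n, φ (T m * T n) = φ (T m) * φ (T n)) (f g : R[T;T⁻¹]) :
    φ (f * g) = φ f * φ g := by
  induction f using LaurentPolynomial.induction_on' with
  | add f₁ f₂ h₁ h₂ => rw [add_mul, map_add, h₁, h₂, map_add, add_mul]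
  | C_mul_T m a =>
    induction g using LaurentPolynomial.induction_on' with
    | add g₁ g₂ h₁ h₂ => rw [mul_add, map_add, h₁, h₂, map_add, mul_add]
    | C_mul_T n b =>
      simp only [← smul_eq_C_mul, smul_mul_smul_comm, map_smul, h]

theorem laurent_linearMap_ext_T_one_mul [Ring R] [AddCommGroup M] [Module R M]
    {φ ψ : R[T;T⁻¹] →ₗ[R] M} {U : M →ₗ[R] M} (hU : Injective U) (h_one : φ 1 = ψ 1)
    (h_mul : ∀ f, φ (T 1 * f) - ψ (T 1 * f) = U (φ f - ψ f)) : φ = ψ := by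
  have h_iff (f : R[T;T⁻¹]) : φ (T 1 * f) = ψ (T 1 * f) ↔ φ f = ψ f := by
    rw [← sub_eq_zero, h_mul, map_eq_zero_iff U hU, sub_eq_zero]
  refine laurent_linearMap_ext_T fun m => ?_
  induction m using Int.induction_on with
  | zero => rwa [T_zero]
  | succ n ih => rwa [add_comm, T_add, h_iff]
  | pred n ih => rwa [← h_iff, ← T_add, add_sub_cancel]

end LinearMaps

section Monomials

variable {R : Type*}

theorem T_one_mul_T_neg_one_mul [Semiring R] (f : R[T;T⁻¹]) : T 1 * (T (-1) * f) = f := by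
  rw [← mul_assoc, ← T_add, add_neg_cancel, T_zero, one_mul]

theorem T_neg_one_mul_T_one_mul [Semiring R] (f : R[T;T⁻¹]) : T (-1) * (T 1 * f) = f := by
  rw [← mul_assoc, ← T_add, neg_add_cancel, T_zero, one_mul]

theorem T_sub_one_ne_zero [Ring R] [Nontrivial R] {m : ℤ} (hm : m ≠ 0) :
    (T m - 1 : R[T;T⁻¹]) ≠ 0 := by
  intro h
  have := congrArg degree (sub_eq_zero.1 h)
  rw [← T_zero, degree_T, degree_T] at this
  exact hm (WithBot.coe_injective this)

end Monomials

variable {K : Type*} [Field K] {q t : K}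

/-- `D` is the Demazure–Lusztig operator `t • s + (t - t⁻¹) • (X ^ 2 - 1)⁻¹ • (s - 1)` with
`s = invert`; here `t` stands for `t½`, and the denominator `X ^ 2 - 1` is cleared. -/
def IsDemazureLusztig (t : K) (D : K[T;T⁻¹] →ₗ[K] K[T;T⁻¹]) : Prop :=
  ∀ f, (T 2 - 1) * D f = t • ((T 2 - 1) * invert f) + (t - t⁻¹) • (invert f - f)

namespace IsDemazureLusztig

variable {D : K[T;T⁻¹] →ₗ[K] K[T;T⁻¹]}

theorem apply_one (hD : IsDemazureLusztig t D) : D 1 = t • 1 := by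
  apply mul_left_cancel₀ (T_sub_one_ne_zero two_ne_zero)
  rw [hD, map_one, sub_self, smul_zero, add_zero, mul_smul_comm]

theorem map_T_one_mul (hD : IsDemazureLusztig t D) (f : K[T;T⁻¹]) :
    D (T 1 * f) = T (-1) * (D f - (t - t⁻¹) • f) := by
  apply mul_left_cancel₀ (T_sub_one_ne_zero two_ne_zero)
  have hXf := hD (T 1 * f)
  have hf := hD f
  have hX : (T 2 : K[T;T⁻¹]) = T 1 * T 1 := by rw [← T_add]; rfl
  have hXX : (T 1 * T (-1) : K[T;T⁻¹]) = 1 := by rw [← T_add, add_neg_cancel, T_zero]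
  rw [map_mul invert, invert_T] at hXf
  rw [hX] at hXf hf ⊢
  simp only [smul_eq_C_mul] at hXf hf ⊢
  linear_combination hXf - T (-1) * hf + C (t - t⁻¹) * T 1 * f * hXX

theorem map_T_neg_one_mul (hD : IsDemazureLusztig t D) (f : K[T;T⁻¹]) :
    D (T (-1) * f) = T 1 * D f + (t - t⁻¹) • (T (-1) * f) := by
  have h := hD.map_T_one_mul (T (-1) * f)
  rw [T_one_mul_T_neg_one_mul] at h
  rw [h, T_one_mul_T_neg_one_mul, sub_add_cancel]

theorem apply_apply (hD : IsDemazureLusztig t D) (ht : t ≠ 0) (f : K[T;T⁻¹]) :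
    D (D f) = (t - t⁻¹) • D f + f := by
  suffices D ∘ₗ D = (t - t⁻¹) • D + LinearMap.id from LinearMap.congr_fun this f
  refine laurent_linearMap_ext_T_one_mul (U := LinearMap.mulLeft K (T 1))
    (isUnit_T 1).mul_right_injective ?_ fun f => ?_
  · have ht2 : t * t = (t - t⁻¹) * t + 1 := by field_simp; ring
    simp only [LinearMap.comp_apply, LinearMap.add_apply, LinearMap.smul_apply, LinearMap.id_apply,
      hD.apply_one, map_smul, smul_smul, ht2, add_smul, one_smul]
  · simp only [LinearMap.comp_apply, LinearMap.add_apply, LinearMap.smul_apply, LinearMap.id_apply,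
      LinearMap.mulLeft_apply, hD.map_T_one_mul, hD.map_T_neg_one_mul, map_sub, map_smul, mul_sub,
      mul_add, mul_smul_comm]
    module

theorem apply_sub_smul (hD : IsDemazureLusztig t D) (ht : t ≠ 0) (f : K[T;T⁻¹]) :
    D (D f - (t - t⁻¹) • f) = f := by
  rw [map_sub, map_smul, hD.apply_apply ht, add_sub_cancel_left]

theorem apply_T_one_mul_apply (hD : IsDemazureLusztig t D) (ht : t ≠ 0) (f : K[T;T⁻¹]) :
    D (T 1 * D f) = T (-1) * f := by
  rw [hD.map_T_one_mul, hD.apply_apply ht, add_sub_cancel_left]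

theorem map_apply_of_map_T_one_mul (hD : IsDemazureLusztig t D) (ht : t ≠ 0)
    {ε : K[T;T⁻¹] →ₗ[K] K} (hε : ∀ f, ε (T 1 * f) = t⁻¹ * ε f) (f : K[T;T⁻¹]) :
    ε (D f) = t * ε f := by
  have hε_neg (f : K[T;T⁻¹]) : ε (T (-1) * f) = t * ε f := by
    rw [← T_one_mul_T_neg_one_mul f, hε, T_one_mul_T_neg_one_mul, mul_inv_cancel_left₀ ht]
  suffices ε ∘ₗ D = t • ε from LinearMap.congr_fun this f
  refine laurent_linearMap_ext_T_one_mul (U := LinearMap.lsmul K K t)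
    (smul_right_injective K ht) ?_ fun f => ?_
  · rw [LinearMap.comp_apply, hD.apply_one, map_smul, LinearMap.smul_apply]
  · simp only [LinearMap.comp_apply, LinearMap.smul_apply, LinearMap.lsmul_apply, smul_eq_mul,
      hD.map_T_one_mul, hε, hε_neg, map_sub, map_smul]
    field_simp
    ring

end IsDemazureLusztig

/-- The operators `D` (written `T` in the Hecke algebra), `π` and `Y = π ∘ D` of the polynomial
representation of the double affine Hecke algebra of type `A₁`; the parameters called `q½` and `t½`
in the literature are `q` and `t` here. -/
structure IsPolynomialRep (q t : K) (D π : K[T;T⁻¹] →ₗ[K] K[T;T⁻¹])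
    (Y : K[T;T⁻¹] ≃ₗ[K] K[T;T⁻¹]) : Prop where
  q_ne_zero : q ≠ 0
  t_ne_zero : t ≠ 0
  demazureLusztig : IsDemazureLusztig t D
  pi_T (m : ℤ) : π (T m) = q ^ m • T (-m)
  Y_apply (f : K[T;T⁻¹]) : Y f = π (D f)

namespace IsPolynomialRep

variable {D π : K[T;T⁻¹] →ₗ[K] K[T;T⁻¹]} {Y : K[T;T⁻¹] ≃ₗ[K] K[T;T⁻¹]}

theorem pi_one (H : IsPolynomialRep q t D π Y) : π 1 = 1 := by
  simpa only [T_zero, zpow_zero, one_smul, neg_zero] using H.pi_T 0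

theorem pi_T_mul (H : IsPolynomialRep q t D π Y) (m : ℤ) (f : K[T;T⁻¹]) :
    π (T m * f) = q ^ m • (T (-m) * π f) := by
  have h_mul (a b : ℤ) : π (T a * T b) = π (T a) * π (T b) := by
    rw [← T_add, H.pi_T, H.pi_T, H.pi_T, smul_mul_smul_comm, ← T_add, ← neg_add,
      zpow_add₀ H.q_ne_zero]
  rw [laurent_map_mul_of_map_T_mul_T h_mul, H.pi_T, smul_mul_assoc]

theorem pi_pi (H : IsPolynomialRep q t D π Y) (f : K[T;T⁻¹]) : π (π f) = f := by
  suffices π ∘ₗ π = LinearMap.id from LinearMap.congr_fun this f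
  refine laurent_linearMap_ext_T fun m => ?_
  rw [LinearMap.comp_apply, H.pi_T, map_smul, H.pi_T, smul_smul, ← zpow_add₀ H.q_ne_zero,
    add_neg_cancel, zpow_zero, one_smul, neg_neg, LinearMap.id_apply]

theorem Y_one (H : IsPolynomialRep q t D π Y) : Y 1 = t • 1 := by
  rw [H.Y_apply, H.demazureLusztig.apply_one, map_smul, H.pi_one]

theorem Y_symm_one (H : IsPolynomialRep q t D π Y) : Y.symm 1 = t⁻¹ • 1 := by
  rw [LinearEquiv.symm_apply_eq, map_smul, H.Y_one, inv_smul_smul₀ H.t_ne_zero]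

theorem Y_symm_apply_D (H : IsPolynomialRep q t D π Y) (f : K[T;T⁻¹]) :
    Y.symm (D f) = D (Y f) - (t - t⁻¹) • Y f := by
  rw [LinearEquiv.symm_apply_eq, H.Y_apply (_ - _), H.demazureLusztig.apply_sub_smul H.t_ne_zero,
    H.Y_apply, H.pi_pi]

theorem Y_symm_T_one_mul_D (H : IsPolynomialRep q t D π Y) (f : K[T;T⁻¹]) :
    Y.symm (T 1 * D f) = q • (T 1 * D (Y f)) := by
  rw [LinearEquiv.symm_apply_eq, map_smul, H.Y_apply (_ * _),
    H.demazureLusztig.apply_T_one_mul_apply H.t_ne_zero, H.pi_T_mul, neg_neg, H.Y_apply, H.pi_pi,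
    zpow_neg_one, smul_inv_smul₀ H.q_ne_zero]

end IsPolynomialRep

/-- `B` is the pairing `B f g = ε (L_f g)`, where `L_f` is the value of the Laurent polynomial `f`
at `Y⁻¹`. It is encoded by the recursion coming from `L_1 = 1` and `L_{X f} = L_f ∘ Y⁻¹`. -/
structure IsDualityPairing {R M : Type*} [CommRing R] [AddCommGroup M] [Module R M]
    (Y : M ≃ₗ[R] M) (ε : M →ₗ[R] R) (B : R[T;T⁻¹] →ₗ[R] M →ₗ[R] R) : Prop where
  one_left : B 1 = ε
  T_one_mul_left (f : R[T;T⁻¹]) (g : M) : B (T 1 * f) g = B f (Y.symm g)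

namespace IsDualityPairing

section Module

variable {R M : Type*} [CommRing R] [AddCommGroup M] [Module R M]
  {Y : M ≃ₗ[R] M} {ε : M →ₗ[R] R} {B : R[T;T⁻¹] →ₗ[R] M →ₗ[R] R}

theorem of_map_T {Z : ℤ → M →ₗ[R] M} (hZ_zero : Z 0 = LinearMap.id)
    (hZ_add : ∀ a b, Z (a + b) = Z a ∘ₗ Z b) (hY : Y.symm.toLinearMap = Z (-1))
    (hB : ∀ m g, B (T m) g = ε (Z (-m) g)) : IsDualityPairing Y ε B where
  one_left := by
    ext g
    rw [← T_zero, hB, neg_zero, hZ_zero, LinearMap.id_apply]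
  T_one_mul_left f g := by
    suffices B.flip g ∘ₗ LinearMap.mulLeft R (T 1) = B.flip (Y.symm g) from
      LinearMap.congr_fun this f
    refine laurent_linearMap_ext_T fun m => ?_
    rw [← LinearEquiv.coe_coe, hY, LinearMap.comp_apply, LinearMap.mulLeft_apply,
      LinearMap.flip_apply, LinearMap.flip_apply, ← T_add, hB, hB, neg_add_rev, hZ_add,
      LinearMap.comp_apply]

theorem T_neg_one_mul_left (hB : IsDualityPairing Y ε B) (f : R[T;T⁻¹]) (g : M) :
    B (T (-1) * f) g = B f (Y g) := by
  rw [← Y.symm_apply_apply g, ← hB.T_one_mul_left, T_one_mul_T_neg_one_mul, Y.symm_apply_apply]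

end Module

theorem flip_eq_zero_iff_of_eigenvector {M : Type*} [AddCommGroup M] [Module K M]
    {Y : M ≃ₗ[K] M} {ε : M →ₗ[K] K} {B : K[T;T⁻¹] →ₗ[K] M →ₗ[K] K}
    (hB : IsDualityPairing Y ε B) {E : M} {c : K} (hE : Y E = c • E) :
    B.flip E = 0 ↔ ε E = 0 := by
  rw [← hB.one_left, ← LinearMap.flip_apply]
  refine ⟨fun h => by rw [h, LinearMap.zero_apply], fun h => ?_⟩
  obtain rfl | hc := eq_or_ne c 0
  · rw [zero_smul, LinearEquiv.map_eq_zero_iff] at hE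
    rw [hE, map_zero]
  have hE_symm : Y.symm E = c⁻¹ • E := by
    rw [LinearEquiv.symm_apply_eq, map_smul, hE, inv_smul_smul₀ hc]
  refine laurent_linearMap_ext_T_one_mul (U := LinearMap.lsmul K K c⁻¹)
    (smul_right_injective K (inv_ne_zero hc)) h fun f => ?_
  simp only [LinearMap.flip_apply, hB.T_one_mul_left, hE_symm, map_smul, LinearMap.zero_apply,
    sub_zero, LinearMap.lsmul_apply]

variable {D π : K[T;T⁻¹] →ₗ[K] K[T;T⁻¹]} {Y : K[T;T⁻¹] ≃ₗ[K] K[T;T⁻¹]}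
  {ε : K[T;T⁻¹] →ₗ[K] K} {B : K[T;T⁻¹] →ₗ[K] K[T;T⁻¹] →ₗ[K] K}

theorem isAdjointPair_D (hB : IsDualityPairing Y ε B) (H : IsPolynomialRep q t D π Y)
    (hε : ∀ f, ε (T 1 * f) = t⁻¹ * ε f) :
    LinearMap.IsAdjointPair B B D D := by
  rw [LinearMap.isAdjointPair_iff_comp_eq_compl₂]
  refine laurent_linearMap_ext_T_one_mul (U := Y.dualMap) Y.dualMap.injective ?_ fun f => ?_
  · refine LinearMap.ext fun g => ?_
    simp only [LinearMap.comp_apply, LinearMap.compl₂_apply, H.demazureLusztig.apply_one, map_smul,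
      LinearMap.smul_apply, hB.one_left, smul_eq_mul,
      H.demazureLusztig.map_apply_of_map_T_one_mul H.t_ne_zero hε]
  · refine LinearMap.ext fun g => ?_
    simp only [LinearMap.comp_apply, LinearMap.compl₂_apply, LinearMap.sub_apply,
      LinearMap.smul_apply, LinearEquiv.coe_coe, LinearEquiv.dualMap_apply,
      H.demazureLusztig.map_T_one_mul, hB.T_neg_one_mul_left, hB.T_one_mul_left, H.Y_symm_apply_D,
      map_sub, map_smul, sub_sub_sub_cancel_right]

theorem isAdjointPair_pi (hB : IsDualityPairing Y ε B) (H : IsPolynomialRep q t D π Y)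
    (hε : ∀ f, ε (T 1 * f) = t⁻¹ * ε f) :
    LinearMap.IsAdjointPair B B π (LinearMap.mulLeft K (T 1) ∘ₗ D) := by
  rw [LinearMap.isAdjointPair_iff_comp_eq_compl₂]
  refine laurent_linearMap_ext_T_one_mul (U := q • Y.dualMap)
    ((smul_right_injective _ H.q_ne_zero).comp Y.dualMap.injective) ?_ fun f => ?_
  · refine LinearMap.ext fun g => ?_
    rw [LinearMap.comp_apply, H.pi_one, LinearMap.compl₂_apply, hB.one_left, LinearMap.comp_apply,
      LinearMap.mulLeft_apply, hε, H.demazureLusztig.map_apply_of_map_T_one_mul H.t_ne_zero hε,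
      inv_mul_cancel_left₀ H.t_ne_zero]
  · refine LinearMap.ext fun g => ?_
    simp only [LinearMap.comp_apply, LinearMap.compl₂_apply, LinearMap.sub_apply,
      LinearMap.smul_apply, LinearEquiv.coe_coe, LinearEquiv.dualMap_apply,
      LinearMap.mulLeft_apply, H.pi_T_mul, zpow_one, hB.T_neg_one_mul_left, hB.T_one_mul_left,
      H.Y_symm_T_one_mul_D, map_sub, map_smul]

theorem isAdjointPair_Y (hB : IsDualityPairing Y ε B) (H : IsPolynomialRep q t D π Y)
    (hε : ∀ f, ε (T 1 * f) = t⁻¹ * ε f) :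
    LinearMap.IsAdjointPair B B Y (LinearMap.mulLeft K (T (-1))) := by
  intro f g
  rw [H.Y_apply, hB.isAdjointPair_pi H hε, hB.isAdjointPair_D H hε,
    LinearMap.comp_apply, LinearMap.mulLeft_apply,
    H.demazureLusztig.apply_T_one_mul_apply H.t_ne_zero, LinearMap.mulLeft_apply]

theorem Y_symm_left (hB : IsDualityPairing Y ε B) (H : IsPolynomialRep q t D π Y)
    (hε : ∀ f, ε (T 1 * f) = t⁻¹ * ε f) (f g : K[T;T⁻¹]) :
    B (Y.symm f) g = B f (T 1 * g) := by
  conv_rhs => rw [← Y.apply_symm_apply f]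
  rw [hB.isAdjointPair_Y H hε, LinearMap.mulLeft_apply, T_neg_one_mul_T_one_mul]

theorem apply_one_right (hB : IsDualityPairing Y ε B) (hY : Y.symm 1 = t⁻¹ • 1) (ht : t ≠ 0)
    (hε : ∀ f, ε (T 1 * f) = t⁻¹ * ε f) (f : K[T;T⁻¹]) : B f 1 = ε f := by
  suffices B.flip 1 = ε from LinearMap.congr_fun this f
  refine laurent_linearMap_ext_T_one_mul (U := LinearMap.lsmul K K t⁻¹)
    (smul_right_injective K (inv_ne_zero ht)) ?_ fun f => ?_
  · rw [LinearMap.flip_apply, hB.one_left]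
  · simp only [LinearMap.flip_apply, hB.T_one_mul_left, hY, hε, map_smul, smul_eq_mul,
      LinearMap.lsmul_apply, mul_sub]

theorem flip_eq (hB : IsDualityPairing Y ε B) (H : IsPolynomialRep q t D π Y)
    (hε : ∀ f, ε (T 1 * f) = t⁻¹ * ε f) : B.flip = B := by
  refine laurent_linearMap_ext_T_one_mul (U := Y.symm.dualMap) Y.symm.dualMap.injective ?_
    fun f => ?_
  · refine LinearMap.ext fun g => ?_
    rw [LinearMap.flip_apply, hB.apply_one_right H.Y_symm_one H.t_ne_zero hε, hB.one_left]
  · refine LinearMap.ext fun g => ?_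
    simp only [LinearMap.flip_apply, LinearMap.sub_apply, LinearEquiv.coe_coe,
      LinearEquiv.dualMap_apply, hB.T_one_mul_left, hB.Y_symm_left H hε]

end IsDualityPairing

theorem stmt10_general {q2 t2 : K} (hq2 : q2 ≠ 0) (ht2 : t2 ≠ 0)
    {S Top Pi Y : K[T;T⁻¹] →ₗ[K] K[T;T⁻¹]}
    (hS : ∀ m, S (T m) = T (-m))
    (hPi : ∀ m, Pi (T m) = q2 ^ m • T (-m))
    (hT : ∀ f, (T 2 - 1) * Top f = t2 • ((T 2 - 1) * S f) + (t2 - t2⁻¹) • (S f - f))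
    (hY : Y = Pi ∘ₗ Top)
    {ev : K[T;T⁻¹] →ₗ[K] K} (hev : ∀ m, ev (T m) = t2 ^ (-m))
    {Yz : ℤ → K[T;T⁻¹] →ₗ[K] K[T;T⁻¹]}
    (hYz0 : Yz 0 = LinearMap.id) (hYz1 : Yz 1 = Y) (hYzadd : ∀ a b, Yz (a + b) = Yz a ∘ₗ Yz b)
    {pair : K[T;T⁻¹] →ₗ[K] K[T;T⁻¹] →ₗ[K] K}
    (hpair : ∀ m g, pair (T m) g = ev (Yz (-m) g))
    {E : K[T;T⁻¹]} {c : K} (hE : Y E = c • E) :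
    pair E = 0 ↔ ev E = 0 := by
  obtain rfl : S = invert.toLinearMap := laurent_linearMap_ext_T fun m => by
    rw [hS, AlgEquiv.toLinearMap_apply, invert_T]
  have hev_mul (f : K[T;T⁻¹]) : ev (T 1 * f) = t2⁻¹ * ev f := by
    rw [laurent_map_mul_of_map_T_mul_T (fun m n => ?_), hev, zpow_neg_one]
    rw [← T_add, hev, hev, hev, neg_add, zpow_add₀ ht2]
  let Yequiv : K[T;T⁻¹] ≃ₗ[K] K[T;T⁻¹] := .ofLinearMap Y (Yz (-1))
    (by rw [← hYz1, ← hYzadd, add_neg_cancel, hYz0])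
    (by rw [← hYz1, ← hYzadd, neg_add_cancel, hYz0])
  have H : IsPolynomialRep q2 t2 Top Pi Yequiv := ⟨hq2, ht2, hT, hPi, LinearMap.congr_fun hY⟩
  have hB : IsDualityPairing Yequiv ev pair := .of_map_T hYz0 hYzadd rfl hpair
  rw [← hB.flip_eq_zero_iff_of_eigenvector hE, hB.flip_eq H hev_mul]

end

/-- if `q` is not a root of unity, a nonzero `Y`-eigenvector
`E ∈ V` belongs to `Rad` if and only if `ev(E) = E(t⁻½) = 0`. -/
theorem stmt10
    (q2 t2 : ℂ) (hq2 : q2 ≠ 0) (ht2 : t2 ≠ 0)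
    (S Top Pi Y : V →ₗ[ℂ] V)
    (hS : ∀ m : ℤ, S (Xm m) = Xm (-m))
    (hPi : ∀ m : ℤ, Pi (Xm m) = q2 ^ m • Xm (-m))
    (hT : ∀ f : V, (Xm 2 - 1) * Top f
        = t2 • ((Xm 2 - 1) * S f) + (t2 - t2⁻¹) • (S f - f))
    (hY : Y = Pi ∘ₗ Top)
    (ev : V →ₗ[ℂ] ℂ) (hev : ∀ m : ℤ, ev (Xm m) = t2 ^ (-m))
    (Yz : ℤ → V →ₗ[ℂ] V)
    (hYz0 : Yz 0 = LinearMap.id) (hYz1 : Yz 1 = Y)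
    (hYzadd : ∀ a b : ℤ, Yz (a + b) = Yz a ∘ₗ Yz b)
    (pair : V →ₗ[ℂ] V →ₗ[ℂ] ℂ)
    (hpair : ∀ (m : ℤ) (g : V), pair (Xm m) g = ev (Yz (-m) g))
    (hqnr : ∀ n : ℕ, 0 < n → (q2 ^ 2) ^ n ≠ 1) :
    ∀ E : V, E ≠ 0 → (∃ c : ℂ, Y E = c • E) →
      (E ∈ Rad pair ↔ ev E = 0) :=
  fun _ _ ⟨_, hc⟩ => stmt10_general hq2 ht2 hS hPi hT hY hev hYz0 hYz1 hYzadd hpair hc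
end
end

section
/- Assume q is not a root of unity (t½ arbitrary nonzero). If Rad ≠ {0}, then for every C > 0 there exists a primary integer m > C such that the polynomial E_m exists and E_m ∈ Rad (equivalently, ev(E_m) = 0). -/
noncomputable section

/-- `sgn m = 1` if `m > 0` and `−1` if `m ≤ 0`. -/
def sgn (m : ℤ) : ℤ := if 0 < m then 1 else -1

/-- The `Y`-eigenvalue `μ_m = q½^(−m) · t½^(−sgn m)`. -/
def mu (q2 t2 : ℂ) (m : ℤ) : ℂ := q2 ^ (-m) * t2 ^ (-sgn m)

/-- `Prec m c` is the relation `m ≻ c`: `|m| > |c|`, or `m > 0` and `c = −m`. -/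
def Prec (m c : ℤ) : Prop := |c| < |m| ∨ (0 < m ∧ c = -m)

/-- `f` has the form `X^m + Σ_{c : m ≻ c} a_c · X^c`. -/
def HasForm (m : ℤ) (f : V) : Prop :=
  ∃ a : ℤ →₀ ℂ, (∀ c ∈ a.support, Prec m c) ∧ f = Xm m + a.sum fun c ac => ac • Xm c

/-- `f` is a nonsymmetric Macdonald polynomial `E_m`: it has the form
`X^m + (lower terms)` and is a `Y`-eigenvector with eigenvalue `μ_m`. -/
def IsE (q2 t2 : ℂ) (Y : V →ₗ[ℂ] V) (m : ℤ) (f : V) : Prop :=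
  HasForm m f ∧ Y f = mu q2 t2 m • f

/-- `m` is primary: `μ_a ≠ μ_m` for every integer `a` with `a ≻ m`. -/
def Primary (q2 t2 : ℂ) (m : ℤ) : Prop :=
  ∀ a : ℤ, Prec a m → mu q2 t2 a ≠ mu q2 t2 m

/-!
The duality pairing makes `T` self-adjoint and `Y` adjoint to `X⁻¹`. Hence, if `Y E = x⁻¹ E`, then
`{f, E} = f(x) {1, E}` and `{E, g} = g(x) {1, E}` for all `f` and `g`, so that `E` lies in the
radical as soon as some `f` in the radical has `f(x) ≠ 0`. A nonzero `f` in the radical has finitely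
many zeros, whereas the numbers `μ_m⁻¹ = q½ᵐ t½` for `m > 0` are pairwise distinct. Moreover, for
large `m` the eigenvalue `μ_m` differs from all other `μ_a`, and as `Y` is triangular in the
monomials, `E_m` exists and is unique.
-/

section Laurent

open LaurentPolynomial

variable {R M : Type*} [CommRing R] [AddCommGroup M] [Module R M]

theorem linearMap_eq_zero_of_T_one_mul {D : R[T;T⁻¹] →ₗ[R] M} {U : M →ₗ[R] M}
    (hU : Function.Injective U) (h : ∀ f, D (T 1 * f) = U (D f)) (h1 : D 1 = 0) : D = 0 := by
  refine (AddMonoidAlgebra.basis ℤ R).ext fun m => ?_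
  change D (T m) = 0
  induction m using Int.induction_on with
  | zero => rw [T_zero, h1]
  | succ n ih => rw [add_comm, T_add, h, ih, map_zero]
  | pred n ih =>
    apply hU
    rw [← h, ← T_add, add_sub_cancel, ih, map_zero]

theorem linearMap_T_eq_zpow_smul {φ : R[T;T⁻¹] →ₗ[R] M} {x : Rˣ}
    (h : ∀ f, φ (T 1 * f) = x • φ f) (m : ℤ) : φ (T m) = x ^ m • φ 1 := by
  induction m using Int.induction_on with
  | zero => rw [T_zero, zpow_zero, one_smul]
  | succ n ih => rw [add_comm, T_add, h, ih, zpow_add, zpow_one, mul_smul]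
  | pred n ih =>
    rw [sub_eq_neg_add, zpow_add, mul_smul, ← ih, zpow_neg_one, eq_inv_smul_iff, ← h, ← T_add,
      add_neg_cancel_left]

theorem linearMap_eq_eval₂_smul {φ : R[T;T⁻¹] →ₗ[R] M} {x : Rˣ}
    (h : ∀ f, φ (T 1 * f) = x • φ f) (f : R[T;T⁻¹]) :
    φ f = eval₂ (RingHom.id R) x f • φ 1 := by
  induction f using LaurentPolynomial.induction_on' with
  | add f g hf hg => rw [map_add, map_add, hf, hg, add_smul]
  | C_mul_T m a =>
    rw [← smul_eq_C_mul, map_smul, linearMap_T_eq_zpow_smul h, smul_eq_C_mul, eval₂_C_mul_T,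
      mul_smul, RingHom.id_apply, Units.smul_def]

theorem finite_setOf_eval₂_eq_zero [IsDomain R] {f : R[T;T⁻¹]} (hf : f ≠ 0) :
    {x : Rˣ | eval₂ (RingHom.id R) x f = 0}.Finite := by
  obtain ⟨n, p, hp⟩ := exists_T_pow f
  have hp0 : p ≠ 0 := by
    rintro rfl
    rw [map_zero, eq_comm, (isUnit_T (R := R) n).mul_left_eq_zero] at hp
    exact hf hp
  refine ((Polynomial.finite_setOfPred_isRoot hp0).preimage Units.val_injective.injOn).subset ?_
  intro x (hx : eval₂ (RingHom.id R) x f = 0)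
  have := congrArg (eval₂ (RingHom.id R) x) hp
  rwa [map_mul, hx, zero_mul, eval₂_toLaurent] at this

theorem eventually_eval₂_zpow_mul_ne_zero [IsDomain R] {q : Rˣ} (hq : ¬IsOfFinOrder q) (t : Rˣ)
    {f : R[T;T⁻¹]} (hf : f ≠ 0) :
    ∀ᶠ m : ℤ in Filter.atTop, eval₂ (RingHom.id R) (q ^ m * t) f ≠ 0 := by
  have hinj : Function.Injective fun m : ℤ => q ^ m * t :=
    (mul_left_injective t).comp (injective_zpow_iff_not_isOfFinOrder.2 hq)
  exact Filter.atTop_le_cofinite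
    ((finite_setOf_eval₂_eq_zero hf).preimage hinj.injOn).eventually_cofinite_notMem

end Laurent

section Triangular

open Module Submodule

variable {ι α K M : Type*} [LinearOrder α] [Field K] [AddCommGroup M] [Module K M]

/-- The linear map `A` is triangular with diagonal entries `d` in the basis `b`, whose vectors are
ordered by the rank function `r`, possibly with ties. -/
def IsTriangular (b : Basis ι K M) (r : ι → α) (d : ι → K) (A : M →ₗ[K] M) : Prop :=
  ∀ i, A (b i) - d i • b i ∈ span K (b '' {j | r j < r i})

namespace IsTriangular

variable {b : Basis ι K M} {r : ι → α} {d : ι → K} {A : M →ₗ[K] M}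

theorem repr_apply (hA : IsTriangular b r d A) {f : M} {j : ι}
    (hf : f ∈ span K (b '' {k | r k ≤ r j})) : b.repr (A f) j = d j * b.repr f j := by
  induction hf using span_induction with
  | zero => simp
  | add f g _ _ hf hg => simp [hf, hg, mul_add]
  | smul a f _ hf => simp [hf, mul_left_comm]
  | mem f hf =>
    obtain ⟨k, hk : r k ≤ r j, rfl⟩ := hf
    have hlow : b.repr (A (b k) - d k • b k) j = 0 :=
      Finsupp.notMem_support_iff.1 fun hj => hk.not_gt (b.mem_span_image.1 (hA k) hj)
    rw [map_sub, map_smul, Finsupp.sub_apply, Finsupp.smul_apply, sub_eq_zero] at hlow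
    rw [hlow, smul_eq_mul, b.repr_self]
    rcases eq_or_ne k j with rfl | hkj
    · rfl
    · rw [Finsupp.single_eq_of_ne' hkj, mul_zero, mul_zero]

theorem exists_diag_eq_of_apply_eq_smul (hA : IsTriangular b r d A) {f : M} {μ : K}
    (hf : A f = μ • f) (hf0 : f ≠ 0) : ∃ j ∈ (b.repr f).support, d j = μ := by
  obtain ⟨j, hj, hmax⟩ := (b.repr f).support.exists_max_image r
    (Finsupp.support_nonempty_iff.2 (b.repr.map_ne_zero_iff.2 hf0))
  have hcoef := hA.repr_apply (b.mem_span_image.2 hmax)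
  rw [hf, map_smul, Finsupp.smul_apply, smul_eq_mul] at hcoef
  exact ⟨j, hj, (mul_right_cancel₀ (Finsupp.mem_support_iff.1 hj) hcoef).symm⟩

theorem apply_mem_span (hA : IsTriangular b r d A) {n : α} {f : M}
    (hf : f ∈ span K (b '' {j | r j < n})) : A f ∈ span K (b '' {j | r j < n}) := by
  induction hf using span_induction with
  | zero => rw [map_zero]; exact zero_mem _
  | add f g _ _ hf hg => rw [map_add]; exact add_mem hf hg
  | smul a f _ hf => rw [map_smul]; exact smul_mem _ a hf
  | mem f hf =>
    obtain ⟨j, hj : r j < n, rfl⟩ := hf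
    have hlow : A (b j) - d j • b j ∈ span K (b '' {j | r j < n}) :=
      span_mono (Set.image_mono fun k hk => lt_trans hk hj) (hA j)
    rw [← sub_add_cancel (A (b j)) (d j • b j)]
    exact add_mem hlow (smul_mem _ _ (subset_span ⟨j, hj, rfl⟩))

theorem exists_eigenvector (hA : IsTriangular b r d A) {i : ι}
    (hfin : {j | r j < r i}.Finite) (hd : ∀ j, r j < r i → d j ≠ d i) :
    ∃ u ∈ span K (b '' {j | r j < r i}), A (b i + u) = d i • (b i + u) := by
  set W := span K (b '' {j | r j < r i})
  have : FiniteDimensional K W := .span_of_finite K (hfin.image b)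
  have hW : ∀ f ∈ W, (A - d i • LinearMap.id : M →ₗ[K] M) f ∈ W := fun f hf =>
    sub_mem (hA.apply_mem_span hf) (smul_mem _ _ hf)
  have hinj : Function.Injective ((A - d i • LinearMap.id : M →ₗ[K] M).restrict hW) := by
    rw [injective_iff_map_eq_zero]
    rintro ⟨f, hf⟩ hAf
    by_contra hf0
    obtain ⟨j, hj, hji⟩ := hA.exists_diag_eq_of_apply_eq_smul
      (sub_eq_zero.1 (congrArg Subtype.val hAf)) (fun h => hf0 (Subtype.ext h))
    exact hd j (b.mem_span_image.1 hf hj) hji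
  obtain ⟨⟨u, hu⟩, hAu⟩ := LinearMap.injective_iff_surjective.1 hinj ⟨_, neg_mem (hA i)⟩
  replace hAu : A u - d i • u = -(A (b i) - d i • b i) := congrArg Subtype.val hAu
  refine ⟨u, hu, ?_⟩
  rw [map_add, smul_add]
  linear_combination (norm := module) hAu

end IsTriangular

end Triangular

theorem Xm_mul_Xm (a b : ℤ) : Xm a * Xm b = Xm (a + b) := (LaurentPolynomial.T_add a b).symm

theorem Xm_zero : Xm 0 = 1 := LaurentPolynomial.T_zero

theorem Xm_mul_Xm_neg_mul (m : ℤ) (f : V) : Xm m * (Xm (-m) * f) = f := by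
  rw [← mul_assoc, Xm_mul_Xm, add_neg_cancel, Xm_zero, one_mul]

theorem Xm_neg_mul_Xm_mul (m : ℤ) (f : V) : Xm (-m) * (Xm m * f) = f := by
  rw [← mul_assoc, Xm_mul_Xm, neg_add_cancel, Xm_zero, one_mul]

theorem linearMap_ext_Xm {M : Type*} [AddCommMonoid M] [Module ℂ M] {A B : V →ₗ[ℂ] M}
    (h : ∀ m, A (Xm m) = B (Xm m)) : A = B :=
  (AddMonoidAlgebra.basis ℤ ℂ).ext h

theorem Xm_two_sub_one_ne_zero : Xm 2 - 1 ≠ 0 := by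
  rw [← Xm_zero, sub_ne_zero]
  exact (AddMonoidAlgebra.basis ℤ ℂ).injective.ne two_ne_zero

/-- The operators `T`, `π` and `Y = π ∘ T` of the polynomial representation; `s` is
`LaurentPolynomial.invert`, and `T` is specified after multiplication by `X² - 1`. -/
structure IsPolynomialRep_s11 (q2 t2 : ℂ) (Top Pi Y : V →ₗ[ℂ] V) : Prop where
  q2_ne_zero : q2 ≠ 0
  t2_ne_zero : t2 ≠ 0
  Pi_Xm : ∀ m : ℤ, Pi (Xm m) = q2 ^ m • Xm (-m)
  sub_one_mul_T : ∀ f : V, (Xm 2 - 1) * Top f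
    = t2 • ((Xm 2 - 1) * LaurentPolynomial.invert f)
      + (t2 - t2⁻¹) • (LaurentPolynomial.invert f - f)
  Y_eq : Y = Pi ∘ₗ Top

namespace IsPolynomialRep_s11

theorem of_inversion {q2 t2 : ℂ} (hq2 : q2 ≠ 0) (ht2 : t2 ≠ 0) {S Top Pi Y : V →ₗ[ℂ] V}
    (hS : ∀ m : ℤ, S (Xm m) = Xm (-m)) (hPi : ∀ m : ℤ, Pi (Xm m) = q2 ^ m • Xm (-m))
    (hT : ∀ f : V, (Xm 2 - 1) * Top f = t2 • ((Xm 2 - 1) * S f) + (t2 - t2⁻¹) • (S f - f))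
    (hY : Y = Pi ∘ₗ Top) : IsPolynomialRep_s11 q2 t2 Top Pi Y := by
  obtain rfl : S = LaurentPolynomial.invert.toLinearMap := linearMap_ext_Xm fun m => by
    rw [hS]
    exact (LaurentPolynomial.invert_T m).symm
  exact ⟨hq2, ht2, hPi, hT, hY⟩

variable {q2 t2 : ℂ} {Top Pi Y : V →ₗ[ℂ] V} (h : IsPolynomialRep_s11 q2 t2 Top Pi Y)

include h

theorem Y_apply (f : V) : Y f = Pi (Top f) := by rw [h.Y_eq, LinearMap.comp_apply]

theorem Pi_one : Pi 1 = 1 := by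
  rw [← Xm_zero, h.Pi_Xm, zpow_zero, one_smul, neg_zero]

theorem Pi_Pi (f : V) : Pi (Pi f) = f := by
  suffices Pi ∘ₗ Pi = LinearMap.id from LinearMap.congr_fun this f
  refine linearMap_ext_Xm fun m => ?_
  simp [h.Pi_Xm, smul_smul, mul_inv_cancel₀ (zpow_ne_zero m h.q2_ne_zero)]

theorem Pi_Xm_mul (k : ℤ) (f : V) : Pi (Xm k * f) = q2 ^ k • (Xm (-k) * Pi f) := by
  suffices Pi ∘ₗ LinearMap.mulLeft ℂ (Xm k) = q2 ^ k • LinearMap.mulLeft ℂ (Xm (-k)) ∘ₗ Pi from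
    LinearMap.congr_fun this f
  refine linearMap_ext_Xm fun m => ?_
  simp [Xm_mul_Xm, h.Pi_Xm, smul_smul, zpow_add₀ h.q2_ne_zero, add_comm]

theorem T_one : Top 1 = t2 • 1 := by
  refine mul_left_cancel₀ Xm_two_sub_one_ne_zero ?_
  rw [h.sub_one_mul_T, map_one, sub_self, smul_zero, add_zero, mul_smul_comm]

theorem T_X_mul (f : V) : Top (Xm 1 * f) = Xm (-1) * (Top f - (t2 - t2⁻¹) • f) := by
  have hs : LaurentPolynomial.invert (Xm 1 * f) = Xm (-1) * LaurentPolynomial.invert f := by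
    rw [map_mul, Xm, LaurentPolynomial.invert_T, Xm]
  have hX : Xm 2 * Xm (-1) = Xm 1 := Xm_mul_Xm 2 (-1)
  have hTf := h.sub_one_mul_T f
  refine mul_left_cancel₀ Xm_two_sub_one_ne_zero ?_
  rw [h.sub_one_mul_T, hs]
  simp only [Algebra.smul_def] at hTf ⊢
  linear_combination -Xm (-1) * hTf + algebraMap ℂ V (t2 - t2⁻¹) * f * hX

theorem T_X_inv_mul (f : V) :
    Top (Xm (-1) * f) = Xm 1 * Top f + (t2 - t2⁻¹) • (Xm (-1) * f) := by
  have hT := h.T_X_mul (Xm (-1) * f)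
  rw [Xm_mul_Xm_neg_mul] at hT
  rw [hT, Xm_mul_Xm_neg_mul, sub_add_cancel]

theorem T_T (f : V) : Top (Top f) = (t2 - t2⁻¹) • Top f + f := by
  suffices Top ∘ₗ Top - (t2 - t2⁻¹) • Top - LinearMap.id = 0 by
    simpa [sub_sub, sub_eq_zero] using LinearMap.congr_fun this f
  have hX : Xm 1 ≠ 0 := (AddMonoidAlgebra.basis ℤ ℂ).ne_zero 1
  refine linearMap_eq_zero_of_T_one_mul (U := LinearMap.mulLeft ℂ (Xm 1))
    (mul_right_injective₀ hX) (fun g => ?_) ?_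
  · change Top (Top (Xm 1 * g)) - (t2 - t2⁻¹) • Top (Xm 1 * g) - Xm 1 * g
      = Xm 1 * (Top (Top g) - (t2 - t2⁻¹) • Top g - g)
    rw [h.T_X_mul, h.T_X_inv_mul, map_sub, map_smul]
    simp only [mul_sub, mul_smul_comm]
    module
  · have ht : t2 * t2 - (t2 - t2⁻¹) * t2 - 1 = 0 := by
      have := h.t2_ne_zero
      field_simp
      ring
    simp only [LinearMap.sub_apply, LinearMap.comp_apply, LinearMap.smul_apply, h.T_one, map_smul,
      LinearMap.id_apply]
    linear_combination (norm := module) ht • (1 : V)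

theorem T_X_T (f : V) : Top (Xm 1 * Top f) = Xm (-1) * f := by
  rw [h.T_X_mul, h.T_T, add_sub_cancel_left]

theorem T_T_sub (f : V) : Top (Top f - (t2 - t2⁻¹) • f) = f := by
  rw [map_sub, map_smul, h.T_T, add_sub_cancel_left]

theorem Y_one_s11 : Y 1 = t2 • 1 := by
  rw [h.Y_apply, h.T_one, map_smul, h.Pi_one]

theorem Y_surjective : Function.Surjective Y := fun g =>
  ⟨Top (Pi g) - (t2 - t2⁻¹) • Pi g, by rw [h.Y_apply, h.T_T_sub, h.Pi_Pi]⟩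

theorem Y_X_mul (f : V) :
    Y (Xm 1 * f) = q2⁻¹ • (Xm 1 * (Y f - (t2 - t2⁻¹) • Pi f)) := by
  rw [h.Y_apply, h.T_X_mul, h.Pi_Xm_mul, zpow_neg_one, neg_neg, map_sub, map_smul, h.Y_apply]

theorem Y_X_inv_mul (f : V) :
    Y (Xm (-1) * f) = q2 • (Xm (-1) * Y f) + ((t2 - t2⁻¹) * q2⁻¹) • (Xm 1 * Pi f) := by
  rw [h.Y_apply, h.T_X_inv_mul, map_add, map_smul, h.Pi_Xm_mul, h.Pi_Xm_mul, zpow_one,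
    zpow_neg_one, neg_neg, smul_smul, h.Y_apply]

end IsPolynomialRep_s11

/-- The bilinear form `pair` is the duality pairing up to scale: `{1, ·}` is a multiple of the
evaluation at `X = t⁻½`, and multiplication by `X` is left adjoint to `Y⁻¹`. -/
structure IsDualityPairing_s11 (t2 : ℂ) (Y : V →ₗ[ℂ] V) (pair : V →ₗ[ℂ] V →ₗ[ℂ] ℂ) : Prop where
  one_X_mul : ∀ g, pair 1 (Xm 1 * g) = t2⁻¹ * pair 1 g
  X_mul_Y : ∀ f g, pair (Xm 1 * f) (Y g) = pair f g

namespace IsDualityPairing_s11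

theorem of_evaluation {t2 : ℂ} (ht2 : t2 ≠ 0) {Y : V →ₗ[ℂ] V} {ev : V →ₗ[ℂ] ℂ}
    (hev : ∀ m : ℤ, ev (Xm m) = t2 ^ (-m)) {Yz : ℤ → V →ₗ[ℂ] V} (hYz0 : Yz 0 = LinearMap.id)
    (hYz1 : Yz 1 = Y) (hYzadd : ∀ a b : ℤ, Yz (a + b) = Yz a ∘ₗ Yz b)
    {pair : V →ₗ[ℂ] V →ₗ[ℂ] ℂ} (hpair : ∀ (m : ℤ) (g : V), pair (Xm m) g = ev (Yz (-m) g)) :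
    IsDualityPairing_s11 t2 Y pair where
  one_X_mul := by
    have hone : pair 1 = ev := LinearMap.ext fun g => by rw [← Xm_zero, hpair, neg_zero, hYz0]; rfl
    suffices ev ∘ₗ LinearMap.mulLeft ℂ (Xm 1) = t2⁻¹ • ev by
      rw [hone]
      exact LinearMap.congr_fun this
    refine linearMap_ext_Xm fun m => ?_
    simp [Xm_mul_Xm, hev, zpow_add₀ ht2, mul_comm]
  X_mul_Y f g := by
    suffices (pair.flip (Y g)) ∘ₗ LinearMap.mulLeft ℂ (Xm 1) = pair.flip g from
      LinearMap.congr_fun this f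
    refine linearMap_ext_Xm fun m => ?_
    change pair (Xm 1 * Xm m) (Y g) = pair (Xm m) g
    rw [Xm_mul_Xm, hpair, hpair, ← hYz1, ← LinearMap.comp_apply (Yz _), ← hYzadd, neg_add_rev,
      neg_add_cancel_right]

variable {q2 t2 : ℂ} {Top Pi Y : V →ₗ[ℂ] V} {pair : V →ₗ[ℂ] V →ₗ[ℂ] ℂ}

theorem X_inv_mul_left (hdual : IsDualityPairing_s11 t2 Y pair) (f g : V) :
    pair (Xm (-1) * f) g = pair f (Y g) := by
  rw [← hdual.X_mul_Y, Xm_mul_Xm_neg_mul]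

variable (rep : IsPolynomialRep_s11 q2 t2 Top Pi Y) (hdual : IsDualityPairing_s11 t2 Y pair)

include rep hdual

theorem one_X_inv_mul (g : V) : pair 1 (Xm (-1) * g) = t2 * pair 1 g := by
  have hX := hdual.one_X_mul (Xm (-1) * g)
  rw [Xm_mul_Xm_neg_mul] at hX
  rw [hX, mul_inv_cancel_left₀ rep.t2_ne_zero]

theorem one_T (g : V) : pair 1 (Top g) = t2 * pair 1 g := by
  suffices pair 1 ∘ₗ Top - t2 • pair 1 = 0 from sub_eq_zero.1 (LinearMap.congr_fun this g)
  refine linearMap_eq_zero_of_T_one_mul (U := t2 • LinearMap.id)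
    (mul_right_injective₀ rep.t2_ne_zero) (fun f => ?_) ?_
  · change pair 1 (Top (Xm 1 * f)) - t2 * pair 1 (Xm 1 * f) = t2 * (pair 1 (Top f) - t2 * pair 1 f)
    rw [rep.T_X_mul, hdual.one_X_inv_mul rep, hdual.one_X_mul, map_sub, map_smul, smul_eq_mul]
    ring
  · change pair 1 (Top 1) - t2 * pair 1 1 = 0
    rw [rep.T_one, map_smul, smul_eq_mul, sub_self]

-- The difference `D f` of the two functionals of `g` satisfies `D (X f) = D f ∘ Y` and vanishes at
-- `f = 1`. The adjoint of `π` is found in the same way, with `D (X f) = q½ D f ∘ Y`.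
theorem T_left (f g : V) : pair (Top f) g = pair f (Top g) := by
  suffices pair ∘ₗ Top - pair.compl₂ Top = 0 from
    sub_eq_zero.1 (LinearMap.congr_fun₂ this f g)
  refine linearMap_eq_zero_of_T_one_mul (U := Y.dualMap)
    (LinearMap.dualMap_injective_of_surjective rep.Y_surjective) (fun f => ?_) ?_
  · refine LinearMap.ext fun g => ?_
    change pair (Top (Xm 1 * f)) g - pair (Xm 1 * f) (Top g)
      = pair (Top f) (Y g) - pair f (Top (Y g))
    have hTg : Top g = Y (Top (Y g) - (t2 - t2⁻¹) • Y g) := by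
      rw [rep.Y_apply (_ - _), rep.T_T_sub, rep.Y_apply, rep.Pi_Pi]
    rw [hTg, hdual.X_mul_Y, rep.T_X_mul, hdual.X_inv_mul_left]
    simp only [map_sub, map_smul, LinearMap.sub_apply, LinearMap.smul_apply]
    ring
  · refine LinearMap.ext fun g => ?_
    change pair (Top 1) g - pair 1 (Top g) = 0
    rw [rep.T_one, hdual.one_T rep, map_smul, LinearMap.smul_apply, smul_eq_mul, sub_self]

theorem Pi_left (f g : V) : pair (Pi f) g = pair f (Xm 1 * Top g) := by
  suffices pair ∘ₗ Pi - pair.compl₂ (LinearMap.mulLeft ℂ (Xm 1) ∘ₗ Top) = 0 from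
    sub_eq_zero.1 (LinearMap.congr_fun₂ this f g)
  refine linearMap_eq_zero_of_T_one_mul (U := q2 • Y.dualMap)
    ((smul_right_injective _ rep.q2_ne_zero).comp
      (LinearMap.dualMap_injective_of_surjective rep.Y_surjective)) (fun f => ?_) ?_
  · refine LinearMap.ext fun g => ?_
    change pair (Pi (Xm 1 * f)) g - pair (Xm 1 * f) (Xm 1 * Top g)
      = q2 * (pair (Pi f) (Y g) - pair f (Xm 1 * Top (Y g)))
    have hXTg : Xm 1 * Top g = Y (q2 • (Xm 1 * Top (Y g))) := by
      rw [map_smul, rep.Y_apply (_ * _), rep.T_X_T, rep.Pi_Xm_mul, rep.Y_apply, rep.Pi_Pi,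
        smul_smul, zpow_neg_one, mul_inv_cancel₀ rep.q2_ne_zero, one_smul, neg_neg]
    rw [hXTg, hdual.X_mul_Y, rep.Pi_Xm_mul, zpow_one, map_smul, LinearMap.smul_apply,
      hdual.X_inv_mul_left, map_smul, smul_eq_mul, smul_eq_mul, mul_sub]
  · refine LinearMap.ext fun g => ?_
    change pair (Pi 1) g - pair 1 (Xm 1 * Top g) = 0
    rw [rep.Pi_one, hdual.one_X_mul, hdual.one_T rep, inv_mul_cancel_left₀ rep.t2_ne_zero, sub_self]

theorem Y_left (f g : V) : pair (Y f) g = pair f (Xm (-1) * g) := by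
  rw [rep.Y_apply, hdual.Pi_left rep, hdual.T_left rep, rep.T_X_T]

section Eigenvector

open LaurentPolynomial

variable {x : ℂˣ} {E : V} (hE : Y E = x⁻¹ • E)

include hE

omit rep in
theorem apply_eigenvector (f : V) : pair f E = eval₂ (RingHom.id ℂ) x f * pair 1 E := by
  refine linearMap_eq_eval₂_smul (φ := pair.flip E) (fun f => ?_) f
  change pair (Xm 1 * f) E = x • pair f E
  rw [← inv_smul_eq_iff, ← hdual.X_mul_Y f E, hE]
  exact (map_smul (pair (Xm 1 * f)) (x⁻¹ : ℂˣ).val E).symm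

theorem eigenvector_apply (g : V) : pair E g = eval₂ (RingHom.id ℂ) x g * pair E 1 := by
  refine linearMap_eq_eval₂_smul (φ := pair E) (fun g => ?_) g
  change pair E (Xm 1 * g) = x • pair E g
  have hY := hdual.Y_left rep E (Xm 1 * g)
  rw [Xm_neg_mul_Xm_mul, hE] at hY
  rw [← inv_smul_eq_iff, ← hY]
  exact (LinearMap.congr_fun (map_smul pair (x⁻¹ : ℂˣ).val E) (Xm 1 * g)).symm

end Eigenvector

theorem apply_one (f : V) : pair f 1 = pair 1 f := by
  have hY : Y 1 = (Units.mk0 t2 rep.t2_ne_zero)⁻¹⁻¹ • 1 := by rw [inv_inv]; exact rep.Y_one_s11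
  rw [hdual.apply_eigenvector hY, hdual.eigenvector_apply rep hY f]

theorem eigenvector_mem_Rad {x : ℂˣ} {E f : V} (hE : Y E = x⁻¹ • E) (hf : f ∈ Rad pair)
    (hx : LaurentPolynomial.eval₂ (RingHom.id ℂ) x f ≠ 0) : E ∈ Rad pair := by
  have hfE : pair f E = 0 := LinearMap.congr_fun (LinearMap.mem_ker.1 hf) E
  have hev : pair 1 E = 0 := by
    rw [hdual.apply_eigenvector hE] at hfE
    exact (mul_eq_zero.1 hfE).resolve_left hx
  refine LinearMap.mem_ker.2 (LinearMap.ext fun g => ?_)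
  rw [hdual.eigenvector_apply rep hE, hdual.apply_one rep, hev, mul_zero, LinearMap.zero_apply]

end IsDualityPairing_s11

/-- A rank function on the exponents of Laurent monomials for which `Y` is triangular: it lists
them as `0, 1, -1, 2, -2, …`. Unlike `≻`, it puts `m` below `-m` for `m > 0`. -/
def exponentRank (m : ℤ) : ℤ := if 0 < m then 2 * m - 1 else -2 * m

theorem exponentRank_lt_iff {m : ℤ} (hm : 0 < m) {c : ℤ} :
    exponentRank c < exponentRank m ↔ |c| < m := by
  grind [exponentRank]

theorem finite_setOf_exponentRank_lt (n : ℤ) : {m : ℤ | exponentRank m < n}.Finite :=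
  (Set.finite_Icc (-n) n).subset fun m (hm : exponentRank m < n) => by
    grind [exponentRank]

theorem Xm_mul_mem_span {s t : Set ℤ} {k : ℤ} (hst : ∀ j ∈ s, k + j ∈ t) {f : V}
    (hf : f ∈ Submodule.span ℂ (Xm '' s)) : Xm k * f ∈ Submodule.span ℂ (Xm '' t) := by
  induction hf using Submodule.span_induction with
  | zero => rw [mul_zero]; exact zero_mem _
  | add f g _ _ hf hg => rw [mul_add]; exact add_mem hf hg
  | smul a f _ hf => rw [mul_smul_comm]; exact Submodule.smul_mem _ a hf
  | mem f hf =>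
    obtain ⟨j, hj, rfl⟩ := hf
    rw [Xm_mul_Xm]
    exact Submodule.subset_span ⟨k + j, hst j hj, rfl⟩

theorem mu_of_pos (q2 t2 : ℂ) {m : ℤ} (hm : 0 < m) : mu q2 t2 m = q2 ^ (-m) * t2⁻¹ := by
  rw [mu, sgn, if_pos hm, zpow_neg_one]

theorem mu_of_nonpos (q2 t2 : ℂ) {m : ℤ} (hm : m ≤ 0) : mu q2 t2 m = q2 ^ (-m) * t2 := by
  rw [mu, sgn, if_neg hm.not_gt, neg_neg, zpow_one]

namespace IsPolynomialRep_s11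

variable {q2 t2 : ℂ} {Top Pi Y : V →ₗ[ℂ] V} (h : IsPolynomialRep_s11 q2 t2 Top Pi Y)

include h

theorem Y_Xm_sub_one_sub {m : ℤ} (hm : m ≤ 0) :
    Y (Xm (m - 1)) - mu q2 t2 (m - 1) • Xm (m - 1)
      = q2 • (Xm (-1) * (Y (Xm m) - mu q2 t2 m • Xm m))
        + ((t2 - t2⁻¹) * q2⁻¹ * q2 ^ m) • Xm (1 - m) := by
  have hX : Xm (m - 1) = Xm (-1) * Xm m := by rw [Xm_mul_Xm, sub_eq_neg_add]
  have hmu : mu q2 t2 (m - 1) = q2 * mu q2 t2 m := by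
    rw [mu_of_nonpos _ _ hm, mu_of_nonpos _ _ (by lia), neg_sub', sub_neg_eq_add,
      zpow_add_one₀ h.q2_ne_zero]
    ring
  rw [hX, h.Y_X_inv_mul, h.Pi_Xm, hmu, mul_smul_comm, Xm_mul_Xm, mul_sub, mul_smul_comm,
    sub_eq_add_neg 1 m]
  module

theorem Y_Xm_add_one_sub {m : ℤ} (hm : 0 < m) :
    Y (Xm (m + 1)) - mu q2 t2 (m + 1) • Xm (m + 1)
      = q2⁻¹ • (Xm 1 * (Y (Xm m) - mu q2 t2 m • Xm m))
        - ((t2 - t2⁻¹) * q2⁻¹ * q2 ^ m) • Xm (1 - m) := by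
  have hX : Xm (m + 1) = Xm 1 * Xm m := by rw [Xm_mul_Xm, add_comm]
  have hmu : mu q2 t2 (m + 1) = q2⁻¹ * mu q2 t2 m := by
    rw [mu_of_pos _ _ hm, mu_of_pos _ _ (by lia), neg_add', zpow_sub_one₀ h.q2_ne_zero]
    ring
  rw [hX, h.Y_X_mul, h.Pi_Xm, hmu, mul_sub, mul_sub, mul_smul_comm, mul_smul_comm, mul_smul_comm,
    Xm_mul_Xm 1 (-m), sub_eq_add_neg 1 m]
  module

theorem Y_Xm_one : Y (Xm 1) = mu q2 t2 1 • Xm 1 := by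
  have hY := h.Y_X_mul 1
  rw [mul_one, h.Y_one_s11, h.Pi_one, ← sub_smul, sub_sub_cancel, mul_smul_comm, mul_one,
    smul_smul] at hY
  rw [hY, mu_of_pos _ _ one_pos, zpow_neg_one]

theorem isTriangular_Y :
    IsTriangular (AddMonoidAlgebra.basis ℤ ℂ) exponentRank (mu q2 t2) Y := by
  intro m
  change Y (Xm m) - mu q2 t2 m • Xm m ∈ Submodule.span ℂ (Xm '' {j | exponentRank j < _})
  rcases le_or_gt m 0 with hm | hm
  · induction m, hm using Int.leInductionDown with
    | base =>
      rw [Xm_zero, h.Y_one_s11, mu_of_nonpos _ _ le_rfl, neg_zero, zpow_zero, one_mul, sub_self]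
      exact zero_mem _
    | pred m hm ih =>
      rw [h.Y_Xm_sub_one_sub hm]
      refine add_mem (Submodule.smul_mem _ _ (Xm_mul_mem_span (fun j hj => ?_) ih))
        (Submodule.smul_mem _ _ (Submodule.subset_span ⟨_, ?_, rfl⟩)) <;>
      grind [exponentRank]
  · induction m, hm using Int.leInduction with
    | base =>
      rw [zero_add, h.Y_Xm_one, sub_self]
      exact zero_mem _
    | succ m hm ih =>
      rw [h.Y_Xm_add_one_sub hm]
      refine sub_mem (Submodule.smul_mem _ _ (Xm_mul_mem_span (fun j hj => ?_) ih))
        (Submodule.smul_mem _ _ (Submodule.subset_span ⟨_, ?_, rfl⟩)) <;>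
      grind [exponentRank]

end IsPolynomialRep_s11

theorem not_prec_self (m : ℤ) : ¬Prec m m := by grind [Prec]

theorem hasForm_iff_sub_mem_span {m : ℤ} {f : V} :
    HasForm m f ↔ f - Xm m ∈ Submodule.span ℂ (Xm '' {c | Prec m c}) := by
  rw [Finsupp.mem_span_image_iff_linearCombination]
  refine exists_congr fun a => and_congr Iff.rfl ?_
  rw [← sub_eq_iff_eq_add', eq_comm, Finsupp.linearCombination_apply]

theorem primary_of_forall_mu_eq {q2 t2 : ℂ} {m : ℤ} (hm : ∀ a, mu q2 t2 a = mu q2 t2 m → a = m) :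
    Primary q2 t2 m := by
  intro a ha hmu
  rw [hm a hmu] at ha
  exact not_prec_self m ha

theorem IsPolynomialRep_s11.existsUnique_isE {q2 t2 : ℂ} {Top Pi Y : V →ₗ[ℂ] V}
    (h : IsPolynomialRep_s11 q2 t2 Top Pi Y) {m : ℤ} (hm : 0 < m)
    (hmu : ∀ a, mu q2 t2 a = mu q2 t2 m → a = m) : ∃! f, IsE q2 t2 Y m f := by
  obtain ⟨u, hu, hYu⟩ := h.isTriangular_Y.exists_eigenvector (finite_setOf_exponentRank_lt _)
    fun j hj hjm => hj.ne (congrArg exponentRank (hmu j hjm))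
  have hlow : {c | exponentRank c < exponentRank m} ⊆ {c | Prec m c} := fun c hc =>
    .inl (((exponentRank_lt_iff hm).1 hc).trans_le (le_abs_self m))
  refine ⟨Xm m + u, ⟨hasForm_iff_sub_mem_span.2 ?_, hYu⟩, fun f hf => ?_⟩
  · rw [add_sub_cancel_left]
    exact Submodule.span_mono (Set.image_mono hlow) hu
  · by_contra hne
    obtain ⟨j, hj, hjm⟩ := h.isTriangular_Y.exists_diag_eq_of_apply_eq_smul (μ := mu q2 t2 m)
      (f := f - (Xm m + u)) (by rw [map_sub, hf.2, smul_sub]; exact congrArg _ hYu)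
      (sub_ne_zero.2 hne)
    have hdiff : f - (Xm m + u) ∈ Submodule.span ℂ (Xm '' {c | Prec m c}) := by
      rw [← sub_sub]
      exact sub_mem (hasForm_iff_sub_mem_span.1 hf.1) (Submodule.span_mono (Set.image_mono hlow) hu)
    rw [hmu j hjm] at hj
    exact not_prec_self m ((AddMonoidAlgebra.basis ℤ ℂ).mem_span_image.1 hdiff hj)

theorem eventually_forall_mu_eq {q t : ℂˣ} (hq : ¬IsOfFinOrder q) :
    ∀ᶠ m : ℤ in Filter.atTop, ∀ a, mu q t a = mu q t m → a = m := by
  have hinj := injective_zpow_iff_not_isOfFinOrder.2 hq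
  obtain ⟨N, hN⟩ : BddBelow {k : ℤ | q ^ k = t ^ 2} :=
    (Set.Subsingleton.finite fun k hk l hl => hinj (hk.trans hl.symm)).bddBelow
  filter_upwards [Filter.eventually_gt_atTop 0, Filter.eventually_gt_atTop (-N)] with m hm hmN a ha
  rw [mu_of_pos _ _ hm] at ha
  rcases le_or_gt a 0 with ha0 | ha0
  · rw [mu_of_nonpos _ _ ha0] at ha
    replace ha : q ^ (-a) * t = q ^ (-m) * t⁻¹ := by exact_mod_cast ha
    have hk : q ^ (a - m) = t ^ 2 := calc
      q ^ (a - m) = q ^ a * (q ^ (-m) * t⁻¹) * t := by group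
      _ = t ^ 2 := by rw [← ha, pow_two]; group
    have hNk : N ≤ a - m := hN hk
    lia
  · rw [mu_of_pos _ _ ha0] at ha
    replace ha : q ^ (-a) = q ^ (-m) := by
      exact_mod_cast mul_right_cancel₀ (inv_ne_zero t.ne_zero) ha
    exact neg_injective (hinj ha)

theorem stmt11_general {q2 t2 : ℂ} {Top Pi Y : V →ₗ[ℂ] V} {pair : V →ₗ[ℂ] V →ₗ[ℂ] ℂ}
    (rep : IsPolynomialRep_s11 q2 t2 Top Pi Y) (hdual : IsDualityPairing_s11 t2 Y pair)
    (hq : ¬IsOfFinOrder (q2 ^ 2)) (hRad : Rad pair ≠ ⊥) :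
    ∀ᶠ m : ℤ in Filter.atTop, Primary q2 t2 m ∧ (∃! f, IsE q2 t2 Y m f) ∧
      ∀ f, IsE q2 t2 Y m f → f ∈ Rad pair := by
  obtain ⟨g, hg, hg0⟩ := (Submodule.ne_bot_iff _).1 hRad
  lift q2 to ℂˣ using isUnit_iff_ne_zero.2 rep.q2_ne_zero
  lift t2 to ℂˣ using isUnit_iff_ne_zero.2 rep.t2_ne_zero
  rw [isOfFinOrder_pow, or_iff_left two_ne_zero, Units.isOfFinOrder_val] at hq
  filter_upwards [Filter.eventually_gt_atTop 0, eventually_forall_mu_eq hq,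
    eventually_eval₂_zpow_mul_ne_zero hq t2 hg0] with m hm hmu hgm
  refine ⟨primary_of_forall_mu_eq hmu, rep.existsUnique_isE hm hmu, fun E hE => ?_⟩
  have hYE : Y E = (q2 ^ m * t2)⁻¹ • E := by
    rw [hE.2, mu_of_pos _ _ hm, Units.smul_def]
    simp [mul_comm]
  exact hdual.eigenvector_mem_Rad rep hYE hg hgm

/-- if `q` is not a root of unity and `Rad ≠ {0}`, then for every
`C > 0` there is a primary integer `m > C` such that `E_m` exists and
`E_m ∈ Rad`. -/
theorem stmt11
    (q2 t2 : ℂ) (hq2 : q2 ≠ 0) (ht2 : t2 ≠ 0)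
    (S Top Pi Y : V →ₗ[ℂ] V)
    (hS : ∀ m : ℤ, S (Xm m) = Xm (-m))
    (hPi : ∀ m : ℤ, Pi (Xm m) = q2 ^ m • Xm (-m))
    (hT : ∀ f : V, (Xm 2 - 1) * Top f
        = t2 • ((Xm 2 - 1) * S f) + (t2 - t2⁻¹) • (S f - f))
    (hY : Y = Pi ∘ₗ Top)
    (ev : V →ₗ[ℂ] ℂ) (hev : ∀ m : ℤ, ev (Xm m) = t2 ^ (-m))
    (Yz : ℤ → V →ₗ[ℂ] V)
    (hYz0 : Yz 0 = LinearMap.id) (hYz1 : Yz 1 = Y)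
    (hYzadd : ∀ a b : ℤ, Yz (a + b) = Yz a ∘ₗ Yz b)
    (pair : V →ₗ[ℂ] V →ₗ[ℂ] ℂ)
    (hpair : ∀ (m : ℤ) (g : V), pair (Xm m) g = ev (Yz (-m) g))
    (hqnr : ∀ n : ℕ, 0 < n → (q2 ^ 2) ^ n ≠ 1) :
    Rad pair ≠ ⊥ →
    ∀ C : ℤ, 0 < C →
      ∃ m : ℤ, C < m ∧ Primary q2 t2 m ∧
        (∃! f : V, IsE q2 t2 Y m f) ∧
        ∀ f : V, IsE q2 t2 Y m f → f ∈ Rad pair := by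
  have hq : ¬IsOfFinOrder (q2 ^ 2) := by simpa [isOfFinOrder_iff_pow_eq_one] using hqnr
  exact fun hRad C _ => ((Filter.eventually_gt_atTop C).and (stmt11_general
    (.of_inversion hq2 ht2 hS hPi hT hY) (.of_evaluation ht2 hev hYz0 hYz1 hYzadd hpair)
    hq hRad)).exists
end
end

section
/- Let b ∈ P, let u_b be the unique element of W such that π_b = b·u_b⁻¹ satisfies λ(π_b) ∩ R = ∅, and set b₋ = u_b(b) ∈ P₋. Then λ(π_b) = {[α, ν_α·j] : α ∈ R₋, j ∈ ℤ, and either (u_b⁻¹(α) ∈ R₊ and 0 < j < ⟨b₋,α^∨⟩) or (u_b⁻¹(α) ∈ R₋ and 0 < j ≤ ⟨b₋,α^∨⟩)}. -/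
open RealInnerProductSpace

noncomputable section

variable {E : Type*} [NormedAddCommGroup E] [InnerProductSpace ℝ E]

/-- The pairing `⟨b, α^∨⟩ = 2⟨b,α⟩/⟨α,α⟩` with the coroot of `α`. -/
def pairCo (b α : E) : ℝ := 2 * ⟪b, α⟫ / ⟪α, α⟫

/-- The Weyl group `W`: the subgroup of linear automorphisms of `E` generated
by the reflections `s_α : β ↦ β − ⟨β,α^∨⟩·α`, `α ∈ R`. -/
def WeylGrp (R : Set E) : Subgroup (E ≃ₗ[ℝ] E) :=
  Subgroup.closure {w | ∃ α ∈ R, ∀ β : E, w β = β - pairCo β α • α}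

/-- The weight lattice `P = {b : ⟨b,α^∨⟩ ∈ ℤ for all α ∈ R}`. -/
def wtLat (R : Set E) : Set E := {b | ∀ α ∈ R, ∃ z : ℤ, pairCo b α = z}

/-- The antidominant weights `P₋ = {b ∈ P : ⟨b,α^∨⟩ ≤ 0 for all α ∈ R₊}`. -/
def wtLatNeg (R Rp : Set E) : Set E :=
  {b | b ∈ wtLat R ∧ ∀ α ∈ Rp, pairCo b α ≤ 0}

/-- The positive affine roots `R̃₊ = R₊ ∪ {[α, ν_α j] : α ∈ R, j > 0}`,
where `ν_α = ⟨α,α⟩/2` and `[α, x]` is the pair `(α, x) ∈ E × ℝ`. -/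
def AffPos (R Rp : Set E) : Set (E × ℝ) :=
  {x | (∃ α ∈ Rp, x = (α, 0)) ∨
       ∃ α ∈ R, ∃ j : ℤ, 0 < j ∧ x = (α, ⟪α, α⟫ / 2 * j)}

/-- The negative affine roots `R̃₋ = −R̃₊`. -/
def AffNeg (R Rp : Set E) : Set (E × ℝ) := {x | -x ∈ AffPos R Rp}

/-- `λ(F) = {α̃ ∈ R̃₊ : F(α̃) ∈ R̃₋}` for an affine transformation `F` of `E × ℝ`. -/
def lamSet (R Rp : Set E) (F : E × ℝ → E × ℝ) : Set (E × ℝ) :=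
  {x | x ∈ AffPos R Rp ∧ F x ∈ AffNeg R Rp}

/-- The length `l(F) = #λ(F)`. -/
def len (R Rp : Set E) (F : E × ℝ → E × ℝ) : ℕ := (lamSet R Rp F).ncard

/-- The action of the translation `b ∈ P ⊆ Ŵ` on `E × ℝ`:
`b([z,ζ]) = [z, ζ − ⟨z,b⟩]`. -/
def transl (b : E) : E × ℝ → E × ℝ := fun p => (p.1, p.2 - ⟪p.1, b⟫)

/-- The action of `w ∈ W ⊆ Ŵ` on `E × ℝ`: `w([z,ζ]) = [w(z), ζ]`. -/
def linMap (u : E ≃ₗ[ℝ] E) : E × ℝ → E × ℝ := fun p => (u p.1, p.2)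

/-- The action of the element `π = b·u⁻¹ ∈ Ŵ` on `E × ℝ`:
`(b·u⁻¹)([z,ζ]) = [u⁻¹(z), ζ − ⟨u⁻¹(z), b⟩]`. -/
def piMap (b : E) (u : E ≃ₗ[ℝ] E) : E × ℝ → E × ℝ :=
  fun p => (u.symm p.1, p.2 - ⟪u.symm p.1, b⟫)

/-! Put `k = ⟨b₋, α^∨⟩`. Since `π_b [α, ν_α j] = [u_b⁻¹ α, ν_α (j - k)]`, the affine root
`[α, ν_α j]` lies in `λ(π_b)` if and only if `0 ≤ j ≤ k`, where `j = 0` is allowed only for `α ∈ R₊`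
and `j = k` only for `u_b⁻¹ α ∈ R₋`. That no such root has `j = 0` makes `b₋` antidominant, so
`k ≤ 0` for `α ∈ R₊`, and only `α ∈ R₋` leaves room for `0 < j ≤ k`. -/

/-- The affine root `[α, ν_α j]`, where `ν_α = ⟨α,α⟩/2`. -/
def affRoot (α : E) (j : ℤ) : E × ℝ := (α, ⟪α, α⟫ / 2 * j)

/-- The group of orthogonal automorphisms of `R`; it contains the Weyl group, and lying in it is all
that matters about `u_b ∈ W` when `λ(π_b)` is computed. -/
def orthAut (R : Set E) : Subgroup (E ≃ₗ[ℝ] E) where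
  carrier := {u | (∀ x y, ⟪u x, u y⟫ = ⟪x, y⟫) ∧ ∀ α, u α ∈ R ↔ α ∈ R}
  one_mem' := ⟨fun _ _ => rfl, fun _ => Iff.rfl⟩
  mul_mem' hu hv :=
    ⟨fun _ _ => (hu.1 _ _).trans (hv.1 _ _), fun _ => (hu.2 _).trans (hv.2 _)⟩
  inv_mem' {u} hu :=
    ⟨fun x y => by simpa using (hu.1 (u⁻¹ x) (u⁻¹ y)).symm,
      fun α => by simpa using (hu.2 (u⁻¹ α)).symm⟩

variable {R Rp : Set E} {b α β : E} {u : E ≃ₗ[ℝ] E} {j k : ℤ}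

theorem sub_pairCo_smul_eq_reflection (β α : E) :
    β - pairCo β α • α = (ℝ ∙ α)ᗮ.reflection β := by
  have hpair : pairCo β α = 2 * (⟪α, β⟫ / ‖α‖ ^ 2) := by
    rw [pairCo, real_inner_comm, real_inner_self_eq_norm_sq, mul_div_assoc]
  rw [Submodule.reflection_orthogonal_apply, Submodule.reflection_singleton_apply, neg_sub, hpair,
    mul_smul, ofNat_smul_eq_nsmul]
  rfl

theorem half_inner_mul_pairCo (b α : E) : ⟪α, α⟫ / 2 * pairCo b α = ⟪b, α⟫ := by
  rcases eq_or_ne α 0 with rfl | hα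
  · simp
  · have : ⟪α, α⟫ ≠ 0 := inner_self_ne_zero.2 hα
    unfold pairCo
    field_simp

theorem neg_mem_of_reflection_mem (hRrefl : ∀ α ∈ R, ∀ β ∈ R, β - pairCo β α • α ∈ R)
    (hα : α ∈ R) : -α ∈ R := by
  simpa only [sub_pairCo_smul_eq_reflection,
    Submodule.reflection_orthogonalComplement_singleton_eq_neg] using hRrefl α hα α hα

theorem weylGrp_le_orthAut (hRrefl : ∀ α ∈ R, ∀ β ∈ R, β - pairCo β α • α ∈ R) :
    WeylGrp R ≤ orthAut R := by
  refine (Subgroup.closure_le _).2 ?_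
  rintro w ⟨α, hα, hw⟩
  simp only [sub_pairCo_smul_eq_reflection] at hw hRrefl
  refine ⟨fun x y => ?_, fun β => ⟨fun h => ?_, fun h => ?_⟩⟩
  · rw [hw, hw, LinearIsometryEquiv.inner_map_map]
  · simpa only [hw, Submodule.reflection_reflection] using hRrefl α hα _ h
  · simpa only [hw] using hRrefl α hα β h

theorem symm_mem_of_mem_orthAut (hu : u ∈ orthAut R) (hα : α ∈ R) : u.symm α ∈ R :=
  ((inv_mem hu).2 α).2 hα

theorem inner_symm_symm_of_mem_orthAut (hu : u ∈ orthAut R) (x y : E) :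
    ⟪u.symm x, u.symm y⟫ = ⟪x, y⟫ :=
  (inv_mem hu).1 x y

theorem inner_map_eq_inner_symm_of_mem_orthAut (hu : u ∈ orthAut R) (x y : E) :
    ⟪u x, y⟫ = ⟪x, u.symm y⟫ := by
  simpa only [LinearEquiv.apply_symm_apply] using hu.1 x (u.symm y)

theorem map_mem_wtLat (hu : u ∈ orthAut R) (hb : b ∈ wtLat R) : u b ∈ wtLat R := by
  intro α hα
  have hpair : pairCo (u b) α = pairCo b (u.symm α) := by
    rw [pairCo, pairCo, inner_map_eq_inner_symm_of_mem_orthAut hu,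
      inner_symm_symm_of_mem_orthAut hu]
  rw [hpair]
  exact hb _ (symm_mem_of_mem_orthAut hu hα)

theorem affRoot_zero (α : E) : affRoot α 0 = (α, 0) := by
  simp [affRoot]

theorem neg_affRoot (α : E) (j : ℤ) : -affRoot α j = affRoot (-α) (-j) := by
  simp [affRoot]

theorem affRoot_inj (hα : α ≠ 0) : affRoot α j = affRoot β k ↔ α = β ∧ j = k := by
  have hν : ⟪α, α⟫ / 2 ≠ 0 := div_ne_zero (inner_self_ne_zero.2 hα) two_ne_zero
  constructor
  · intro h
    obtain rfl : α = β := congrArg Prod.fst h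
    exact ⟨rfl, Int.cast_injective (mul_left_cancel₀ hν (congrArg Prod.snd h))⟩
  · rintro ⟨rfl, rfl⟩
    rfl

theorem mem_affPos_iff_exists_affRoot {x : E × ℝ} :
    x ∈ AffPos R Rp ↔
      (∃ α ∈ Rp, x = affRoot α 0) ∨ ∃ α ∈ R, ∃ j : ℤ, 0 < j ∧ x = affRoot α j := by
  simp only [affRoot_zero]
  rfl

theorem exists_eq_affRoot_of_mem_affPos (hRp : Rp ⊆ R) {x : E × ℝ} (hx : x ∈ AffPos R Rp) :
    ∃ α ∈ R, ∃ j : ℤ, x = affRoot α j := by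
  rcases mem_affPos_iff_exists_affRoot.1 hx with ⟨α, hα, rfl⟩ | ⟨α, hα, j, -, rfl⟩
  · exact ⟨α, hRp hα, 0, rfl⟩
  · exact ⟨α, hα, j, rfl⟩

theorem affRoot_mem_affPos_iff (hα : α ∈ R) (hα0 : α ≠ 0) :
    affRoot α j ∈ AffPos R Rp ↔ 0 < j ∨ j = 0 ∧ α ∈ Rp := by
  simp only [mem_affPos_iff_exists_affRoot, affRoot_inj hα0]
  constructor
  · rintro (⟨_, hαp, rfl, hj⟩ | ⟨_, -, _, hj, -, rfl⟩)
    · exact Or.inr ⟨hj, hαp⟩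
    · exact Or.inl hj
  · rintro (hj | ⟨hj, hαp⟩)
    · exact Or.inr ⟨α, hα, j, hj, rfl, rfl⟩
    · exact Or.inl ⟨α, hαp, rfl, hj⟩

theorem affRoot_mem_affNeg_iff (hα : -α ∈ R) (hα0 : α ≠ 0) :
    affRoot α j ∈ AffNeg R Rp ↔ j < 0 ∨ j = 0 ∧ -α ∈ Rp := by
  rw [AffNeg, Set.mem_ofPred_eq, neg_affRoot, affRoot_mem_affPos_iff hα (neg_ne_zero.2 hα0),
    neg_pos, neg_eq_zero]

theorem piMap_affRoot (hu : u ∈ orthAut R) (hk : pairCo (u b) α = k) :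
    piMap b u (affRoot α j) = affRoot (u.symm α) (j - k) := by
  have hinner : ⟪u.symm α, b⟫ = ⟪α, α⟫ / 2 * k := by
    rw [← hk, half_inner_mul_pairCo, inner_map_eq_inner_symm_of_mem_orthAut hu, real_inner_comm]
  simp only [piMap, affRoot, inner_symm_symm_of_mem_orthAut hu, hinner, Int.cast_sub, mul_sub]

theorem affRoot_mem_lamSet_piMap_iff (hR0 : (0 : E) ∉ R) (hRneg : ∀ α ∈ R, -α ∈ R)
    (hb : b ∈ wtLat R) (hu : u ∈ orthAut R) (hα : α ∈ R) :
    affRoot α j ∈ lamSet R Rp (piMap b u) ↔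
      (0 < j ∨ j = 0 ∧ α ∈ Rp) ∧
        ((j : ℝ) < pairCo (u b) α ∨ (j : ℝ) = pairCo (u b) α ∧ -(u.symm α) ∈ Rp) := by
  obtain ⟨k, hk⟩ := map_mem_wtLat hu hb α hα
  have huα : u.symm α ∈ R := symm_mem_of_mem_orthAut hu hα
  rw [lamSet, Set.mem_ofPred_eq, affRoot_mem_affPos_iff hα (ne_of_mem_of_not_mem hα hR0),
    piMap_affRoot hu hk,
    affRoot_mem_affNeg_iff (hRneg _ huα) (ne_of_mem_of_not_mem huα hR0),
    hk, sub_neg, sub_eq_zero, Int.cast_lt, Int.cast_inj]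

theorem map_mem_wtLatNeg_of_notMem_lamSet (hR0 : (0 : E) ∉ R) (hRneg : ∀ α ∈ R, -α ∈ R)
    (hRp : Rp ⊆ R) (hb : b ∈ wtLat R) (hu : u ∈ orthAut R)
    (hlam : ∀ α ∈ R, (α, (0 : ℝ)) ∉ lamSet R Rp (piMap b u)) :
    u b ∈ wtLatNeg R Rp := by
  refine ⟨map_mem_wtLat hu hb, fun α hα => ?_⟩
  by_contra! hpos
  refine hlam α (hRp hα) ?_
  rw [← affRoot_zero, affRoot_mem_lamSet_piMap_iff hR0 hRneg hb hu (hRp hα)]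
  exact ⟨Or.inr ⟨rfl, hα⟩, Or.inl (by rwa [Int.cast_zero])⟩

theorem stmt17_general (hR0 : (0 : E) ∉ R) (hRneg : ∀ α ∈ R, -α ∈ R) (hRp : Rp ⊆ R)
    (hRcover : ∀ α ∈ R, α ∈ Rp ∨ -α ∈ Rp) (hb : b ∈ wtLat R) (hu : u ∈ orthAut R)
    (hlam : ∀ α ∈ R, (α, (0 : ℝ)) ∉ lamSet R Rp (piMap b u)) :
    lamSet R Rp (piMap b u) =
      {x : E × ℝ | ∃ α : E, -α ∈ Rp ∧ ∃ j : ℤ, x = (α, ⟪α, α⟫ / 2 * j) ∧ 0 < j ∧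
        ((u.symm α ∈ Rp ∧ (j : ℝ) < pairCo (u b) α) ∨
          (-(u.symm α) ∈ Rp ∧ (j : ℝ) ≤ pairCo (u b) α))} := by
  have hmem {α : E} {j : ℤ} (hα : α ∈ R) :=
    affRoot_mem_lamSet_piMap_iff (Rp := Rp) (j := j) hR0 hRneg hb hu hα
  ext x
  constructor
  · intro hx
    obtain ⟨α, hα, j, rfl⟩ := exists_eq_affRoot_of_mem_affPos hRp hx.1
    obtain ⟨hj, hjk⟩ := (hmem hα).1 hx
    have hj0 : j ≠ 0 := by
      rintro rfl
      exact hlam α hα (affRoot_zero α ▸ hx)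
    have hjpos : 0 < j := hj.resolve_right fun h => hj0 h.1
    have hle : (j : ℝ) ≤ pairCo (u b) α := hjk.elim le_of_lt fun h => h.1.le
    have hαneg : -α ∈ Rp := (hRcover α hα).resolve_left fun hαp =>
      ((Int.cast_pos.2 hjpos).trans_le hle).not_ge
        ((map_mem_wtLatNeg_of_notMem_lamSet hR0 hRneg hRp hb hu hlam).2 α hαp)
    refine ⟨α, hαneg, j, rfl, hjpos, ?_⟩
    have huα := hRcover _ (symm_mem_of_mem_orthAut hu hα)
    tauto
  · rintro ⟨α, hαneg, j, rfl, hj, hjk⟩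
    have hα : α ∈ R := neg_neg α ▸ hRneg _ (hRp hαneg)
    refine (hmem hα).2 ⟨Or.inl hj, ?_⟩
    rw [le_iff_lt_or_eq] at hjk
    tauto

/-- for `b ∈ P`, `u_b ∈ W` the unique element with
`λ(π_b) ∩ R = ∅` for `π_b = b·u_b⁻¹`, and `b₋ = u_b(b) ∈ P₋`:
`λ(π_b) = {[α, ν_α j] : α ∈ R₋, (u_b⁻¹(α) ∈ R₊ and 0 < j < ⟨b₋,α^∨⟩) or
(u_b⁻¹(α) ∈ R₋ and 0 < j ≤ ⟨b₋,α^∨⟩)}`. -/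
theorem stmt17
    [FiniteDimensional ℝ E] (hdim : 1 ≤ Module.finrank ℝ E)
    (R : Set E) (hRfin : R.Finite) (hR0 : (0 : E) ∉ R)
    (hRspan : Submodule.span ℝ R = ⊤)
    (hRrefl : ∀ α ∈ R, ∀ β ∈ R, β - pairCo β α • α ∈ R)
    (hRcrys : ∀ α ∈ R, ∀ β ∈ R, ∃ z : ℤ, pairCo β α = z)
    (hRred : ∀ α ∈ R, ∀ c : ℝ, c • α ∈ R → c = 1 ∨ c = -1)
    (hRirr : ¬∃ R1 R2 : Set E, R1.Nonempty ∧ R2.Nonempty ∧ R1 ∪ R2 = R ∧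
        ∀ α ∈ R1, ∀ β ∈ R2, ⟪α, β⟫ = 0)
    (hnorm1 : ∀ α ∈ R, 2 ≤ ⟪α, α⟫) (hnorm2 : ∃ α ∈ R, ⟪α, α⟫ = 2)
    (Rp : Set E) (hRpsub : Rp ⊆ R)
    (hRppart : ∀ α ∈ R, (α ∈ Rp ∨ -α ∈ Rp) ∧ ¬(α ∈ Rp ∧ -α ∈ Rp))
    (hRpadd : ∀ α ∈ Rp, ∀ β ∈ Rp, α + β ∈ R → α + β ∈ Rp)
    :
    ∀ b ∈ wtLat R, ∀ u : E ≃ₗ[ℝ] E, u ∈ WeylGrp R →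
      (∀ α ∈ R, (α, (0 : ℝ)) ∉ lamSet R Rp (piMap b u)) →
      lamSet R Rp (piMap b u) =
        {x : E × ℝ | ∃ α : E, -α ∈ Rp ∧ ∃ j : ℤ, x = (α, ⟪α, α⟫ / 2 * j) ∧ 0 < j ∧
          ((u.symm α ∈ Rp ∧ (j : ℝ) < pairCo (u b) α) ∨
            (-(u.symm α) ∈ Rp ∧ (j : ℝ) ≤ pairCo (u b) α))} :=
  fun _ hb _ hu hlam => stmt17_general hR0 (fun _ => neg_mem_of_reflection_mem hRrefl) hRpsub
    (fun α hα => (hRppart α hα).1) hb (weylGrp_le_orthAut hRrefl hu) hlam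
end
end
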